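/- arXiv:1704.08481 — 2 statements merged into one kernel-verified Lean document; each statement's English description precedes it below -/
import Mathlib

section
/- For every n ≥ 2, puso(n) = 2·border(n−1), i.e. the number of outmaps on the standard n-cube (mapping subsets of {1,…,n} to subsets of {1,…,n}) that are PUSOs of the full face [∅,{1,…,n}] equals twice the number of outmaps on the standard (n−1)-cube that are border USOs of the full face [∅,{1,…,n−1}]. -/
/-!
A face with a direction `i` in its carrier has a lower and an upper facet along `i`. A vertex whose
only outgoing direction in the face is possibly `i` is a sink of one of these facets; it is also a
sink of the face either under `φ` or under `φ` with all `i`-edges reversed. Counting such vertices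
both ways, the numbers of sinks of the face under `φ` and under its reversal sum to the number of
facet sinks, which is `2` as soon as both facets have a unique sink.

Hence reversing a direction turns a PUSO into a PUSO and exchanges "no sink" with "two sinks".
Reversing the directions in `φ V` makes `V` a sink, so the parity of `|φ V|` is the same for all
vertices `V`, and there is a second vertex with the outmap value `φ V`, necessarily antipodal to `V`
because proper faces have unique sinks. Therefore a PUSO is determined by its restriction to a facet
together with the common parity of its values, and reversing the remaining direction shows that both
parities occur over every border USO.
-/

open Finset
open scoped symmDiff

/-- `V` is a sink of the face `[A,B]` of the standard cube (vertices are subsets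
of `{1,…,n}`) under the outmap `φ`: `V` belongs to the face and `φ V` has no
coordinate in the carrier `B \ A`. -/
def IsSink (φ : Finset ℕ → Finset ℕ) (A B V : Finset ℕ) : Prop :=
  A ⊆ V ∧ V ⊆ B ∧ φ V ∩ (B \ A) = ∅

/-- The face `[A,B]` has exactly one sink under `φ`. -/
def HasUniqueSink (φ : Finset ℕ → Finset ℕ) (A B : Finset ℕ) : Prop :=
  ∃! V, IsSink φ A B V

/-- `φ` is a USO of the face `[A,B]`: every face contained in `[A,B]`
(including `[A,B]` itself) has exactly one sink under `φ`. -/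
def IsUSO (φ : Finset ℕ → Finset ℕ) (A B : Finset ℕ) : Prop :=
  A ⊆ B ∧ ∀ A' B' : Finset ℕ, A ⊆ A' → A' ⊆ B' → B' ⊆ B → HasUniqueSink φ A' B'

/-- `φ` is a PUSO of the face `[A,B]`: `[A,B]` does not have exactly one sink
under `φ`, but every proper face contained in `[A,B]` has exactly one sink. -/
def IsPUSO (φ : Finset ℕ → Finset ℕ) (A B : Finset ℕ) : Prop :=
  A ⊆ B ∧ ¬ HasUniqueSink φ A B ∧
    ∀ A' B' : Finset ℕ, A ⊆ A' → A' ⊆ B' → B' ⊆ B → ¬(A' = A ∧ B' = B) →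
      HasUniqueSink φ A' B'

/-- `ψ` is a border USO of the full face of the standard `n`-cube: it is a USO
and there is an outmap `φ` on the standard `(n+1)`-cube that is a PUSO of the
full face and whose restriction to the facet `[∅, {1,…,n}]` agrees with `ψ`. -/
def IsBorderUSO (n : ℕ) (ψ : Finset ℕ → Finset ℕ) : Prop :=
  IsUSO ψ ∅ (Finset.Icc 1 n) ∧
    ∃ φ : Finset ℕ → Finset ℕ, IsPUSO φ ∅ (Finset.Icc 1 (n + 1)) ∧
      ∀ V : Finset ℕ, V ⊆ Finset.Icc 1 n → φ V ∩ Finset.Icc 1 n = ψ V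

/-- The set of outmaps of the standard `n`-cube (normalized: mapping subsets of
`{1,…,n}` to subsets of `{1,…,n}` and `∅` elsewhere) that are PUSOs of the full
face `[∅,{1,…,n}]`. -/
def PUSOOutmaps (n : ℕ) : Set (Finset ℕ → Finset ℕ) :=
  {φ | (∀ V : Finset ℕ, V ⊆ Finset.Icc 1 n → φ V ⊆ Finset.Icc 1 n) ∧
       (∀ V : Finset ℕ, ¬ V ⊆ Finset.Icc 1 n → φ V = ∅) ∧
       IsPUSO φ ∅ (Finset.Icc 1 n)}

/-- `puso n`: the number of outmaps of the standard `n`-cube that are PUSOs of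
the full face. -/
noncomputable def pusoCount (n : ℕ) : ℕ := (PUSOOutmaps n).ncard

/-- The set of outmaps of the standard `m`-cube (normalized: mapping subsets of
`{1,…,m}` to subsets of `{1,…,m}` and `∅` elsewhere) that are border USOs of
the full face `[∅,{1,…,m}]`. -/
def BorderOutmaps (m : ℕ) : Set (Finset ℕ → Finset ℕ) :=
  {ψ | (∀ V : Finset ℕ, V ⊆ Finset.Icc 1 m → ψ V ⊆ Finset.Icc 1 m) ∧
       (∀ V : Finset ℕ, ¬ V ⊆ Finset.Icc 1 m → ψ V = ∅) ∧
       IsBorderUSO m ψ}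

/-- `border m`: the number of outmaps of the standard `m`-cube that are border
USOs of the full face. -/
noncomputable def borderCount (m : ℕ) : ℕ := (BorderOutmaps m).ncard

section Sinks

variable {φ φ' : Finset ℕ → Finset ℕ} {A B A' B' U V T : Finset ℕ} {i : ℕ}

lemma isSink_iff : IsSink φ A B V ↔ A ⊆ V ∧ V ⊆ B ∧ ∀ j ∈ φ V, j ∈ B → j ∈ A := by
  simp only [IsSink, ← disjoint_iff_inter_eq_empty, disjoint_left, mem_sdiff, not_and, not_not]

/-- The sinks of the face `[A,B]` under `φ`, as a finite set, so that they can be counted. -/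
def sinks (φ : Finset ℕ → Finset ℕ) (A B : Finset ℕ) : Finset (Finset ℕ) :=
  {V ∈ Finset.Icc A B | φ V ∩ (B \ A) = ∅}

lemma mem_sinks : V ∈ sinks φ A B ↔ IsSink φ A B V := by
  simp [sinks, IsSink, and_assoc]

lemma hasUniqueSink_iff_card_sinks : HasUniqueSink φ A B ↔ #(sinks φ A B) = 1 := by
  simp only [HasUniqueSink, ExistsUnique, card_eq_one, eq_singleton_iff_unique_mem, mem_sinks]

lemma sinks_congr (h : ∀ V, A ⊆ V → V ⊆ B → φ V ∩ (B \ A) = φ' V ∩ (B \ A)) :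
    sinks φ A B = sinks φ' A B := by
  refine filter_congr fun V hV => ?_
  rw [h V (mem_Icc.1 hV).1 (mem_Icc.1 hV).2]

lemma IsSink.of_subface (h : IsSink φ A B V) (hA : A ⊆ A') (hAV : A' ⊆ V) (hVB : V ⊆ B')
    (hB : B' ⊆ B) : IsSink φ A' B' V :=
  ⟨hAV, hVB, subset_empty.1 <|
    (inter_subset_inter_left (sdiff_subset_sdiff hB hA)).trans h.2.2.subset⟩

/-- The outmap obtained from `φ` by reversing all edges whose direction lies in `T`. -/
def reorient (T : Finset ℕ) (φ : Finset ℕ → Finset ℕ) (V : Finset ℕ) : Finset ℕ :=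
  φ V ∆ T

lemma reorient_empty : reorient ∅ φ = φ := by
  funext V
  exact symmDiff_bot (φ V)

lemma reorient_insert (hi : i ∉ T) : reorient (insert i T) φ = reorient {i} (reorient T φ) := by
  funext V
  grind [reorient, mem_symmDiff]

lemma isSink_reorient_iff : IsSink (reorient T φ) A B V ↔
    A ⊆ V ∧ V ⊆ B ∧ φ V ∩ (B \ A) = T ∩ (B \ A) := by
  rw [IsSink, reorient, ← inf_eq_inter, inf_symmDiff_distrib_right, ← bot_eq_empty,
    symmDiff_eq_bot, inf_eq_inter, inf_eq_inter]

lemma card_sinks_add_card_sinks_reorient (hi : i ∈ B \ A) :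
    #(sinks φ A B) + #(sinks (reorient {i} φ) A B) =
      #(sinks φ A (B.erase i)) + #(sinks φ (insert i A) B) := by
  let nearSinks : Finset (Finset ℕ) := {V ∈ Finset.Icc A B | ∀ j ∈ φ V, j ∈ B → j ∈ A ∨ j = i}
  have sinks_eq : sinks φ A B = nearSinks.filter (i ∉ φ ·) := by
    ext V
    rw [mem_sinks, isSink_iff]
    grind
  have sinks_reorient_eq : sinks (reorient {i} φ) A B = nearSinks.filter (¬ i ∉ φ ·) := by
    ext V
    rw [mem_sinks, isSink_iff]
    grind [reorient, mem_symmDiff]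
  have sinks_lower_eq : sinks φ A (B.erase i) = nearSinks.filter (i ∉ ·) := by
    ext V
    rw [mem_sinks, isSink_iff]
    grind
  have sinks_upper_eq : sinks φ (insert i A) B = nearSinks.filter (¬ i ∉ ·) := by
    ext V
    rw [mem_sinks, isSink_iff]
    grind
  rw [sinks_eq, sinks_reorient_eq, sinks_lower_eq, sinks_upper_eq,
    card_filter_add_card_filter_not, card_filter_add_card_filter_not]

lemma card_sinks_add_card_sinks_reorient_eq_two (hi : i ∈ B \ A) (hAB : A ⊆ B)
    (h : ∀ A' B', A ⊆ A' → A' ⊆ B' → B' ⊆ B → ¬(A' = A ∧ B' = B) → HasUniqueSink φ A' B') :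
    #(sinks φ A B) + #(sinks (reorient {i} φ) A B) = 2 := by
  obtain ⟨hiB, hiA⟩ := mem_sdiff.1 hi
  have lower : #(sinks φ A (B.erase i)) = 1 := hasUniqueSink_iff_card_sinks.1 <|
    h _ _ subset_rfl (subset_erase.2 ⟨hAB, hiA⟩) (erase_subset i B)
      fun hB => erase_ne_self.2 hiB hB.2
  have upper : #(sinks φ (insert i A) B) = 1 := hasUniqueSink_iff_card_sinks.1 <|
    h _ _ (subset_insert i A) (insert_subset hiB hAB) subset_rfl
      fun hA => insert_ne_self.2 hiA hA.1
  rw [card_sinks_add_card_sinks_reorient hi, lower, upper]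

lemma hasUniqueSink_reorient_singleton_iff (hAB : A ⊆ B)
    (h : ∀ A' B', A ⊆ A' → A' ⊆ B' → B' ⊆ B → ¬(A' = A ∧ B' = B) → HasUniqueSink φ A' B') :
    HasUniqueSink (reorient {i} φ) A B ↔ HasUniqueSink φ A B := by
  rw [hasUniqueSink_iff_card_sinks, hasUniqueSink_iff_card_sinks]
  by_cases hi : i ∈ B \ A
  · have := card_sinks_add_card_sinks_reorient_eq_two hi hAB h
    omega
  · rw [sinks_congr fun V _ _ => show reorient {i} φ V ∩ (B \ A) = φ V ∩ (B \ A) by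
      grind [reorient, mem_symmDiff]]

end Sinks

namespace IsPUSO

variable {φ φ' : Finset ℕ → Finset ℕ} {A B U V T : Finset ℕ} {i : ℕ}

lemma isUSO_of_ssubset (h : IsPUSO φ A B) {B' : Finset ℕ} (hA : A ⊆ B') (hB : B' ⊂ B) :
    IsUSO φ A B' :=
  ⟨hA, fun A₁ B₁ hA₁ hAB₁ hB₁ => h.2.2 A₁ B₁ hA₁ hAB₁ (hB₁.trans hB.1)
    fun heq => hB.2 (heq.2 ▸ hB₁)⟩

lemma reorient_singleton (h : IsPUSO φ A B) (i : ℕ) : IsPUSO (reorient {i} φ) A B := by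
  obtain ⟨hAB, hfull, hproper⟩ := h
  refine ⟨hAB, mt (hasUniqueSink_reorient_singleton_iff hAB hproper).1 hfull, ?_⟩
  intro A' B' hA hAB' hB hne
  refine (hasUniqueSink_reorient_singleton_iff hAB' fun A₁ B₁ hA₁ hAB₁ hB₁ _ => ?_).2
    (hproper A' B' hA hAB' hB hne)
  refine hproper A₁ B₁ (hA.trans hA₁) hAB₁ (hB₁.trans hB) ?_
  rintro ⟨rfl, rfl⟩
  exact hne ⟨hA₁.antisymm hA, hB.antisymm hB₁⟩

protected lemma reorient (h : IsPUSO φ A B) (T : Finset ℕ) : IsPUSO (reorient T φ) A B := by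
  induction T using Finset.induction_on with
  | empty => rwa [reorient_empty]
  | insert i T hi ih =>
    rw [reorient_insert hi]
    exact ih.reorient_singleton i

lemma carrier_nonempty (h : IsPUSO φ A B) : (B \ A).Nonempty := by
  rw [sdiff_nonempty]
  intro hBA
  obtain rfl := h.1.antisymm hBA
  exact h.2.1 ⟨A, ⟨subset_rfl, subset_rfl, by simp⟩, fun V hV => hV.2.1.antisymm hV.1⟩

lemma card_sinks_eq_zero_or_two (h : IsPUSO φ A B) :
    #(sinks φ A B) = 0 ∨ #(sinks φ A B) = 2 := by
  obtain ⟨i, hi⟩ := h.carrier_nonempty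
  have hsum := card_sinks_add_card_sinks_reorient_eq_two hi h.1 h.2.2
  have hne : #(sinks φ A B) ≠ 1 := mt hasUniqueSink_iff_card_sinks.2 h.2.1
  omega

lemma sinks_reorient_nonempty_iff (h : IsPUSO φ A B) (hT : T ⊆ B \ A) :
    (sinks (reorient T φ) A B).Nonempty ↔ ((sinks φ A B).Nonempty ↔ Even #T) := by
  induction T using Finset.induction_on with
  | empty => simp [reorient_empty]
  | insert i T hi ih =>
    obtain ⟨hiC, hTC⟩ := insert_subset_iff.1 hT
    have hPUSO := h.reorient T
    have hsum := card_sinks_add_card_sinks_reorient_eq_two hiC hPUSO.1 hPUSO.2.2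
    have hswap : (sinks (reorient {i} (reorient T φ)) A B).Nonempty ↔
        ¬ (sinks (reorient T φ) A B).Nonempty := by
      rw [← card_pos, ← card_pos]
      have := hPUSO.card_sinks_eq_zero_or_two
      omega
    rw [reorient_insert hi, hswap, ih hTC, card_insert_of_notMem hi, Nat.even_add_one,
      not_iff, not_iff_comm]
    exact iff_comm

lemma even_card_iff_sinks_nonempty (h : IsPUSO φ A B) (hAV : A ⊆ V) (hVB : V ⊆ B) :
    Even #(φ V ∩ (B \ A)) ↔ (sinks φ A B).Nonempty := by
  have hV : V ∈ sinks (reorient (φ V ∩ (B \ A)) φ) A B :=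
    mem_sinks.2 (isSink_reorient_iff.2 ⟨hAV, hVB, by simp⟩)
  exact ((h.sinks_reorient_nonempty_iff inter_subset_right).1 ⟨V, hV⟩).symm

lemma eq_symmDiff_of_isSink (h : IsPUSO φ A B) (hU : IsSink φ A B U) (hV : IsSink φ A B V)
    (hne : V ≠ U) : V = U ∆ (B \ A) := by
  have hA : A ⊆ U ∩ V := subset_inter hU.1 hV.1
  have hB : U ∪ V ⊆ B := union_subset hU.2.1 hV.2.1
  -- The face spanned by `U` and `V` has two sinks, so it cannot be proper.
  obtain ⟨rfl, rfl⟩ : U ∩ V = A ∧ U ∪ V = B := by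
    by_contra hproper
    exact hne <| (h.2.2 (U ∩ V) (U ∪ V) hA inter_subset_union hB hproper).unique
      (hV.of_subface hA inter_subset_right subset_union_right hB)
      (hU.of_subface hA inter_subset_left subset_union_left hB)
  grind [mem_symmDiff]

lemma antipode (h : IsPUSO φ A B) (hAV : A ⊆ V) (hVB : V ⊆ B) :
    φ (V ∆ (B \ A)) ∩ (B \ A) = φ V ∩ (B \ A) := by
  have hPUSO := h.reorient (φ V)
  have hV : IsSink (reorient (φ V) φ) A B V :=
    isSink_reorient_iff.2 ⟨hAV, hVB, rfl⟩
  have hcard : 1 < #(sinks (reorient (φ V) φ) A B) := by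
    have hpos := card_pos.2 ⟨V, mem_sinks.2 hV⟩
    have := hPUSO.card_sinks_eq_zero_or_two
    omega
  obtain ⟨W, hW, hne⟩ := exists_mem_ne hcard V
  rw [mem_sinks] at hW
  obtain rfl := hPUSO.eq_symmDiff_of_isSink hV hW hne
  exact (isSink_reorient_iff.1 hW).2.2

end IsPUSO

section Parity

variable {α : Type*} [DecidableEq α] {s t : Finset α} {i : α}

lemma even_card_symmDiff_singleton : Even #(s ∆ {i}) ↔ ¬ Even #s := by
  by_cases hi : i ∈ s
  · have hs : s ∆ {i} = s.erase i := by grind [mem_symmDiff]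
    rw [hs, ← card_erase_add_one hi, Nat.even_add_one, not_not]
  · have hs : s ∆ {i} = insert i s := by grind [mem_symmDiff]
    rw [hs, card_insert_of_notMem hi, Nat.even_add_one]

lemma eq_of_erase_eq_of_even_card_iff (h : s.erase i = t.erase i)
    (hparity : Even #s ↔ Even #t) : s = t := by
  by_contra hne
  have hmem (j : α) (hj : j ≠ i) : j ∈ s ↔ j ∈ t := by
    simpa only [mem_erase, ne_eq, hj, not_false_eq_true, true_and] using Finset.ext_iff.1 h j
  have hs : s = t ∆ {i} := by grind [mem_symmDiff]
  rw [hs, even_card_symmDiff_singleton] at hparity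
  tauto

end Parity

lemma IsPUSO.inter_carrier_eq_of_facet {φ φ' : Finset ℕ → Finset ℕ} {A B V : Finset ℕ} {i : ℕ}
    (h : IsPUSO φ A B) (h' : IsPUSO φ' A B) (hi : i ∈ B \ A)
    (hfacet : ∀ V, A ⊆ V → V ⊆ B.erase i → φ V ∩ (B.erase i \ A) = φ' V ∩ (B.erase i \ A))
    (hparity : Even #(φ A ∩ (B \ A)) ↔ Even #(φ' A ∩ (B \ A))) (hAV : A ⊆ V) (hVB : V ⊆ B) :
    φ V ∩ (B \ A) = φ' V ∩ (B \ A) := by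
  have lower : ∀ V, A ⊆ V → V ⊆ B.erase i → φ V ∩ (B \ A) = φ' V ∩ (B \ A) := by
    intro V hAV hVB
    have hVB' := hVB.trans (erase_subset i B)
    refine eq_of_erase_eq_of_even_card_iff (i := i) ?_ ?_
    · rw [← inter_erase, ← inter_erase, ← erase_sdiff_comm, hfacet V hAV hVB]
    · rwa [h.even_card_iff_sinks_nonempty hAV hVB', h'.even_card_iff_sinks_nonempty hAV hVB',
        ← h.even_card_iff_sinks_nonempty subset_rfl h.1,
        ← h'.even_card_iff_sinks_nonempty subset_rfl h.1]
  by_cases hiV : i ∈ V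
  · rw [← h.antipode hAV hVB, ← h'.antipode hAV hVB]
    apply lower <;> grind [mem_symmDiff]
  · exact lower V hAV (subset_erase.2 ⟨hVB, hiV⟩)

section Restriction

variable {φ : Finset ℕ → Finset ℕ} {S A B V : Finset ℕ}

/-- The outmap induced by `φ` on the cube over `S`. As in `PUSOOutmaps` and `BorderOutmaps`, it is
normalized to take the value `∅` off that cube. -/
def restrictOutmap (S : Finset ℕ) (φ : Finset ℕ → Finset ℕ) (V : Finset ℕ) : Finset ℕ :=
  if V ⊆ S then φ V ∩ S else ∅

lemma restrictOutmap_of_subset (hV : V ⊆ S) : restrictOutmap S φ V = φ V ∩ S :=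
  if_pos hV

lemma restrictOutmap_eq_self_iff : restrictOutmap S φ = φ ↔
    (∀ V, V ⊆ S → φ V ⊆ S) ∧ ∀ V, ¬ V ⊆ S → φ V = ∅ := by
  simp only [funext_iff, restrictOutmap, ← forall_and]
  refine forall_congr' fun V => ?_
  by_cases hV : V ⊆ S <;> simp [hV, eq_comm (a := ∅)]

lemma restrictOutmap_restrictOutmap {S' : Finset ℕ} (h : S ⊆ S') :
    restrictOutmap S (restrictOutmap S' φ) = restrictOutmap S φ := by
  funext V
  by_cases hV : V ⊆ S
  · simp only [restrictOutmap, hV, hV.trans h, if_true, inter_assoc, inter_eq_right.2 h]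
  · simp only [restrictOutmap, hV, if_false]

lemma restrictOutmap_reorient {T : Finset ℕ} (h : Disjoint S T) :
    restrictOutmap S (reorient T φ) = restrictOutmap S φ := by
  funext V
  grind [restrictOutmap, reorient, mem_symmDiff, disjoint_left]

lemma hasUniqueSink_restrictOutmap_iff (hB : B ⊆ S) :
    HasUniqueSink (restrictOutmap S φ) A B ↔ HasUniqueSink φ A B := by
  rw [hasUniqueSink_iff_card_sinks, hasUniqueSink_iff_card_sinks, sinks_congr fun V _ hV => ?_]
  rw [restrictOutmap_of_subset (hV.trans hB), inter_assoc,
    inter_eq_right.2 (sdiff_subset.trans hB)]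

protected lemma IsUSO.restrictOutmap (h : IsUSO φ A B) (hB : B ⊆ S) :
    IsUSO (restrictOutmap S φ) A B :=
  ⟨h.1, fun A' B' hA hAB hB' =>
    (hasUniqueSink_restrictOutmap_iff (hB'.trans hB)).2 (h.2 A' B' hA hAB hB')⟩

protected lemma IsPUSO.restrictOutmap (h : IsPUSO φ A B) (hB : B ⊆ S) :
    IsPUSO (restrictOutmap S φ) A B :=
  ⟨h.1, mt (hasUniqueSink_restrictOutmap_iff hB).1 h.2.1, fun A' B' hA hAB hB' hne =>
    (hasUniqueSink_restrictOutmap_iff (hB'.trans hB)).2 (h.2.2 A' B' hA hAB hB' hne)⟩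

end Restriction

section Counting

variable {φ φ' : Finset ℕ → Finset ℕ} {m n : ℕ}

lemma mem_pusoOutmaps_iff : φ ∈ PUSOOutmaps n ↔
    restrictOutmap (Finset.Icc 1 n) φ = φ ∧ IsPUSO φ ∅ (Finset.Icc 1 n) := by
  rw [restrictOutmap_eq_self_iff, and_assoc]
  rfl

lemma mem_borderOutmaps_iff : φ ∈ BorderOutmaps m ↔
    restrictOutmap (Finset.Icc 1 m) φ = φ ∧ IsBorderUSO m φ := by
  rw [restrictOutmap_eq_self_iff, and_assoc]
  rfl

lemma IsPUSO.restrictOutmap_mem_pusoOutmaps (h : IsPUSO φ ∅ (Finset.Icc 1 n)) :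
    restrictOutmap (Finset.Icc 1 n) φ ∈ PUSOOutmaps n :=
  mem_pusoOutmaps_iff.2 ⟨restrictOutmap_restrictOutmap subset_rfl, h.restrictOutmap subset_rfl⟩

lemma Icc_one_succ_erase : (Finset.Icc 1 (m + 1)).erase (m + 1) = Finset.Icc 1 m := by
  rw [Icc_erase_right, Finset.Ico_add_one_right_eq_Icc]

lemma Icc_one_ssubset_Icc_one_succ : Finset.Icc 1 m ⊂ Finset.Icc 1 (m + 1) := by
  rw [← Icc_one_succ_erase]
  exact erase_ssubset (by simp)

lemma borderOutmaps_eq_image_restrictOutmap :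
    BorderOutmaps m = restrictOutmap (Finset.Icc 1 m) '' PUSOOutmaps (m + 1) := by
  have hsub := Icc_one_ssubset_Icc_one_succ (m := m)
  ext ψ
  constructor
  · intro hψ
    obtain ⟨hψ, _, φ, hφ, hφψ⟩ := mem_borderOutmaps_iff.1 hψ
    refine ⟨_, hφ.restrictOutmap_mem_pusoOutmaps, ?_⟩
    rw [restrictOutmap_restrictOutmap hsub.1, ← hψ]
    funext V
    by_cases hV : V ⊆ Finset.Icc 1 m
    · grind [restrictOutmap]
    · simp only [restrictOutmap, hV, if_false]
  · rintro ⟨φ, hφ, rfl⟩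
    have hPUSO := (mem_pusoOutmaps_iff.1 hφ).2
    exact mem_borderOutmaps_iff.2 ⟨restrictOutmap_restrictOutmap subset_rfl,
      (hPUSO.isUSO_of_ssubset (empty_subset _) hsub).restrictOutmap subset_rfl,
      φ, hPUSO, fun V hV => (restrictOutmap_of_subset hV).symm⟩

lemma eq_of_even_card_iff_of_restrictOutmap_eq
    (hφ : φ ∈ PUSOOutmaps (m + 1)) (hφ' : φ' ∈ PUSOOutmaps (m + 1))
    (hparity : Even #(φ ∅) ↔ Even #(φ' ∅))
    (hfacet : restrictOutmap (Finset.Icc 1 m) φ = restrictOutmap (Finset.Icc 1 m) φ') :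
    φ = φ' := by
  have hempty : ∀ χ ∈ PUSOOutmaps (m + 1), χ ∅ ∩ Finset.Icc 1 (m + 1) = χ ∅ :=
    fun χ hχ => inter_eq_left.2 (hχ.1 ∅ (empty_subset _))
  rw [mem_pusoOutmaps_iff] at hφ hφ'
  rw [← hφ.1, ← hφ'.1]
  funext V
  by_cases hV : V ⊆ Finset.Icc 1 (m + 1)
  · rw [restrictOutmap_of_subset hV, restrictOutmap_of_subset hV]
    have := hφ.2.inter_carrier_eq_of_facet hφ'.2 (i := m + 1) (V := V) (by simp) ?_ ?_
      (empty_subset V) hV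
    · simpa only [sdiff_empty] using this
    · intro U _ hU
      rw [Icc_one_succ_erase] at hU ⊢
      rw [sdiff_empty, ← restrictOutmap_of_subset hU, ← restrictOutmap_of_subset hU, hfacet]
    · rwa [sdiff_empty, hempty φ (mem_pusoOutmaps_iff.2 hφ), hempty φ' (mem_pusoOutmaps_iff.2 hφ')]
  · simp only [restrictOutmap, hV, if_false]

lemma exists_even_card_iff_not_and_restrictOutmap_eq (hφ : φ ∈ PUSOOutmaps (m + 1)) :
    ∃ χ ∈ PUSOOutmaps (m + 1), (Even #(χ ∅) ↔ ¬ Even #(φ ∅)) ∧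
      restrictOutmap (Finset.Icc 1 m) χ = restrictOutmap (Finset.Icc 1 m) φ := by
  have hsub := Icc_one_ssubset_Icc_one_succ (m := m)
  have hPUSO := (mem_pusoOutmaps_iff.1 hφ).2.reorient {m + 1}
  refine ⟨_, hPUSO.restrictOutmap_mem_pusoOutmaps, ?_, ?_⟩
  · have hvalue : reorient {m + 1} φ ∅ ⊆ Finset.Icc 1 (m + 1) :=
      symmDiff_subset_union.trans (union_subset (hφ.1 ∅ (empty_subset _)) (by simp))
    rw [restrictOutmap_of_subset (empty_subset _), inter_eq_left.2 hvalue]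
    exact even_card_symmDiff_singleton
  · rw [restrictOutmap_restrictOutmap hsub.1, restrictOutmap_reorient (by simp)]

lemma bijOn_parity_restrictOutmap :
    Set.BijOn (fun φ => (decide (Even #(φ ∅)), restrictOutmap (Finset.Icc 1 m) φ))
      (PUSOOutmaps (m + 1)) (Set.univ ×ˢ BorderOutmaps m) := by
  rw [borderOutmaps_eq_image_restrictOutmap]
  refine ⟨fun φ hφ => ⟨trivial, Set.mem_image_of_mem _ hφ⟩, ?_, ?_⟩
  · intro φ hφ φ' hφ' heq
    obtain ⟨hparity, hfacet⟩ := Prod.ext_iff.1 heq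
    exact eq_of_even_card_iff_of_restrictOutmap_eq hφ hφ' (decide_eq_decide.1 hparity) hfacet
  · rintro ⟨b, _⟩ ⟨-, φ, hφ, rfl⟩
    by_cases hb : decide (Even #(φ ∅)) = b
    · exact ⟨φ, hφ, Prod.ext hb rfl⟩
    · obtain ⟨χ, hχ, hparity, hfacet⟩ := exists_even_card_iff_not_and_restrictOutmap_eq hφ
      refine ⟨χ, hχ, Prod.ext ?_ hfacet⟩
      simpa only [hparity, decide_not, Bool.not_eq] using hb

end Counting

/-- `puso(n) = 2 · border(n-1)` for all `n ≥ 2`. -/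
theorem puso_eq_two_mul_border (n : ℕ) (hn : 2 ≤ n) :
    pusoCount n = 2 * borderCount (n - 1) := by
  obtain ⟨m, rfl⟩ := Nat.exists_eq_add_of_le' (one_le_two.trans hn)
  calc (PUSOOutmaps (m + 1)).ncard
      = ((Set.univ : Set Bool) ×ˢ BorderOutmaps m).ncard := bijOn_parity_restrictOutmap.ncard_eq
    _ = 2 * (BorderOutmaps m).ncard := by
      rw [Set.ncard_prod, Set.ncard_univ, Nat.card_eq_fintype_card, Fintype.card_bool]
end

section
/- Let φ be a bijective outmap (a bijection from subsets of {1,…,n} to subsets of {1,…,n}) that is a USO of the full face [∅,{1,…,n}] of the standard n-cube. Then the inverse map φ⁻¹ is also a USO of the full face [∅,{1,…,n}] of the standard n-cube. -/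
/-!
The proof rests on the Szabó–Welzl characterization of unique sink orientations: an outmap `φ` is a
USO of a face iff any two distinct vertices `U`, `V` of it differ in some coordinate in which
`φ U` and `φ V` differ too. This condition treats vertices and outmap values alike, so it passes to
a right inverse of `φ`.

The necessity of the condition comes from the fact that reversing all edges in a set `R` of
directions preserves USOs: if `φ U` and `φ V` agree on `U ∆ V`, then after reversing the directions
in `φ U` both `U` and `V` are sinks of the face `[U ∩ V, U ∪ V]`. Its sufficiency is a count: it
makes `V ↦ φ V ∩ (B \ A)` an injection of the `2 ^ |B \ A|` vertices of `[A, B]` into the subsets of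
the carrier, which is then onto and attains `∅` exactly once.
-/

open Finset
open scoped symmDiff

theorem existsUnique_eq_or_eq_and_iff_xor {α : Type*} {a b : α} {p : α → Prop} (hab : a ≠ b) :
    (∃! x, (x = a ∨ x = b) ∧ p x) ↔ Xor (p a) (p b) := by
  constructor
  · rintro ⟨x, ⟨rfl | rfl, hx⟩, huniq⟩
    · exact Or.inl ⟨hx, fun hb => hab (huniq b ⟨Or.inr rfl, hb⟩).symm⟩
    · exact Or.inr ⟨hx, fun ha => hab (huniq a ⟨Or.inl rfl, ha⟩)⟩
  · rintro (⟨ha, hb⟩ | ⟨hb, ha⟩)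
    · exact ⟨a, ⟨Or.inl rfl, ha⟩, by rintro x ⟨rfl | rfl, hx⟩; exacts [rfl, absurd hx hb]⟩
    · exact ⟨b, ⟨Or.inr rfl, hb⟩, by rintro x ⟨rfl | rfl, hx⟩; exacts [absurd hx ha, rfl]⟩

theorem inter_eq_inter_iff_disjoint_symmDiff {α : Type*} [DecidableEq α] {s t u : Finset α} :
    s ∩ u = t ∩ u ↔ Disjoint (s ∆ t) u := by
  rw [← symmDiff_eq_bot, ← inf_eq_inter, ← inf_eq_inter, ← inf_symmDiff_distrib_right,
    disjoint_iff]

theorem symmDiff_subset_sdiff_of_mem_Icc {α : Type*} [DecidableEq α] {A B U V : Finset α}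
    (hU : U ∈ Set.Icc A B) (hV : V ∈ Set.Icc A B) : U ∆ V ⊆ B \ A :=
  union_subset (sdiff_subset_sdiff hU.2 hV.1) (sdiff_subset_sdiff hV.2 hU.1)

section

variable {φ ψ : Finset ℕ → Finset ℕ} {A B A' B' R U V W : Finset ℕ} {i : ℕ}

theorem isSink_iff_mem_Icc_and_disjoint :
    IsSink φ A B V ↔ V ∈ Set.Icc A B ∧ Disjoint (φ V) (B \ A) := by
  rw [IsSink, disjoint_iff_inter_eq_empty, Set.mem_Icc, and_assoc]

theorem isSink_inter_union_iff :
    IsSink φ (U ∩ V) (U ∪ V) W ↔ W ∈ Set.Icc (U ∩ V) (U ∪ V) ∧ Disjoint (φ W) (U ∆ V) := by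
  rw [isSink_iff_mem_Icc_and_disjoint, symmDiff_eq_sup_sdiff_inf, sup_eq_union, inf_eq_inter]

theorem isSink_iff_isSink_facet (hi : i ∈ B \ A) :
    IsSink φ A B V ↔
      (IsSink φ A (B.erase i) V ∨ IsSink φ (insert i A) B V) ∧ i ∉ φ V := by
  have hlower : B.erase i \ A = (B \ A).erase i := erase_sdiff_comm B A i
  have hupper : B \ insert i A = (B \ A).erase i := sdiff_insert B A i
  have hdisj : Disjoint (φ V) (B \ A) ↔ Disjoint (φ V) ((B \ A).erase i) ∧ i ∉ φ V := by
    rw [← insert_erase hi, disjoint_insert_right, erase_insert (notMem_erase i _), and_comm]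
  simp only [isSink_iff_mem_Icc_and_disjoint, hlower, hupper, hdisj, Set.mem_Icc, subset_erase,
    insert_subset_iff]
  tauto

/-- The outmap of the orientation obtained from the one with outmap `φ` by reversing all edges in
the directions of `R`. It serves to turn a vertex with prescribed outmap value into a sink. -/
def reverseOutmap (φ : Finset ℕ → Finset ℕ) (R : Finset ℕ) : Finset ℕ → Finset ℕ :=
  fun V => φ V ∆ R

theorem reverseOutmap_empty : reverseOutmap φ ∅ = φ :=
  funext fun V => symmDiff_bot (φ V)

theorem reverseOutmap_insert (hi : i ∉ R) :
    reverseOutmap φ (insert i R) = reverseOutmap (reverseOutmap φ R) {i} := by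
  funext V
  have hinsert : R ∆ {i} = insert i R := by
    rw [(disjoint_singleton_right.2 hi).symmDiff_eq_sup, sup_eq_union, union_comm, insert_eq]
  rw [reverseOutmap, reverseOutmap, reverseOutmap, symmDiff_assoc, hinsert]

theorem mem_reverseOutmap_singleton : i ∈ reverseOutmap φ {i} V ↔ i ∉ φ V := by
  simp [reverseOutmap, mem_symmDiff]

theorem isSink_reverseOutmap_iff_of_disjoint (hR : Disjoint R (B \ A)) :
    IsSink (reverseOutmap φ R) A B V ↔ IsSink φ A B V := by
  have hcarrier : reverseOutmap φ R V ∩ (B \ A) = φ V ∩ (B \ A) := by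
    rwa [inter_eq_inter_iff_disjoint_symmDiff, reverseOutmap, symmDiff_comm,
      symmDiff_symmDiff_cancel_left]
  rw [IsSink, IsSink, hcarrier]

theorem hasUniqueSink_iff_xor (hi : i ∈ B \ A)
    (hU : ∀ W, IsSink φ A (B.erase i) W ↔ W = U) (hV : ∀ W, IsSink φ (insert i A) B W ↔ W = V) :
    HasUniqueSink φ A B ↔ Xor (i ∉ φ U) (i ∉ φ V) := by
  have hiU : i ∉ U := (subset_erase.1 ((hU U).2 rfl).2.1).2
  have hiV : i ∈ V := (insert_subset_iff.1 ((hV V).2 rfl).1).1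
  simp only [HasUniqueSink, isSink_iff_isSink_facet hi, hU, hV]
  exact existsUnique_eq_or_eq_and_iff_xor (ne_of_mem_of_not_mem' hiV hiU).symm

theorem HasUniqueSink.exists_forall_isSink_iff (h : HasUniqueSink φ A B) :
    ∃ V, ∀ W, IsSink φ A B W ↔ W = V :=
  h.imp fun _ hV W => ⟨hV.2 W, fun hW => hW ▸ hV.1⟩

/-- The sink of the face is the one of the two facet sinks at which the edge in direction `i` is
incoming, so reversing this direction turns the other facet sink into the sink of the face. -/
theorem HasUniqueSink.reverse_singleton (hi : i ∈ B \ A)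
    (hlower : HasUniqueSink φ A (B.erase i)) (hupper : HasUniqueSink φ (insert i A) B)
    (h : HasUniqueSink φ A B) :
    HasUniqueSink (reverseOutmap φ {i}) A B := by
  obtain ⟨U, hU⟩ := hlower.exists_forall_isSink_iff
  obtain ⟨V, hV⟩ := hupper.exists_forall_isSink_iff
  have hU' : ∀ W, IsSink (reverseOutmap φ {i}) A (B.erase i) W ↔ W = U := fun W =>
    (isSink_reverseOutmap_iff_of_disjoint (by simp)).trans (hU W)
  have hV' : ∀ W, IsSink (reverseOutmap φ {i}) (insert i A) B W ↔ W = V := fun W =>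
    (isSink_reverseOutmap_iff_of_disjoint (by simp)).trans (hV W)
  rw [hasUniqueSink_iff_xor hi hU' hV', mem_reverseOutmap_singleton,
    mem_reverseOutmap_singleton, xor_not_not]
  exact (hasUniqueSink_iff_xor hi hU hV).1 h

theorem IsUSO.reverse_singleton (h : IsUSO φ A B) (i : ℕ) : IsUSO (reverseOutmap φ {i}) A B := by
  refine ⟨h.1, fun C D hAC hCD hDB => ?_⟩
  by_cases hi : i ∈ D \ C
  · obtain ⟨hiD, hiC⟩ := mem_sdiff.1 hi
    exact HasUniqueSink.reverse_singleton hi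
      (h.2 C (D.erase i) hAC (subset_erase.2 ⟨hCD, hiC⟩) ((erase_subset i D).trans hDB))
      (h.2 (insert i C) D (hAC.trans (subset_insert i C)) (insert_subset hiD hCD) hDB)
      (h.2 C D hAC hCD hDB)
  · have hdisj : Disjoint {i} (D \ C) := disjoint_singleton_left.2 hi
    simpa only [HasUniqueSink, isSink_reverseOutmap_iff_of_disjoint hdisj] using h.2 C D hAC hCD hDB

theorem IsUSO.reverse (h : IsUSO φ A B) (R : Finset ℕ) : IsUSO (reverseOutmap φ R) A B := by
  induction R using Finset.induction_on with
  | empty => rwa [reverseOutmap_empty]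
  | insert i R hi ih => exact reverseOutmap_insert hi ▸ ih.reverse_singleton i

/-- The Szabó–Welzl condition on the face `[A,B]`: any two distinct vertices differ in a coordinate
in which their outmap values differ too. It characterizes USOs. -/
def IsSeparating (φ : Finset ℕ → Finset ℕ) (A B : Finset ℕ) : Prop :=
  (Set.Icc A B).Pairwise fun U V => ¬ Disjoint (φ U ∆ φ V) (U ∆ V)

theorem IsSeparating.mono (h : IsSeparating φ A B) (hA : A ⊆ A') (hB : B' ⊆ B) :
    IsSeparating φ A' B' :=
  Set.Pairwise.mono (Set.Icc_subset_Icc hA hB) h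

theorem IsUSO.isSeparating (h : IsUSO φ A B) : IsSeparating φ A B := by
  intro U hU V hV hne hdisj
  have hface : HasUniqueSink (reverseOutmap φ (φ U)) (U ∩ V) (U ∪ V) :=
    (h.reverse (φ U)).2 _ _ (subset_inter hU.1 hV.1) inter_subset_union (union_subset hU.2 hV.2)
  have hsinkU : IsSink (reverseOutmap φ (φ U)) (U ∩ V) (U ∪ V) U :=
    isSink_inter_union_iff.2 ⟨⟨inter_subset_left, subset_union_left⟩, by simp [reverseOutmap]⟩
  have hsinkV : IsSink (reverseOutmap φ (φ U)) (U ∩ V) (U ∪ V) V :=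
    isSink_inter_union_iff.2 ⟨⟨inter_subset_right, subset_union_right⟩, by
      rwa [reverseOutmap, symmDiff_comm (φ V)]⟩
  exact hne (hface.unique hsinkU hsinkV)

theorem IsSeparating.injOn (h : IsSeparating φ A B) :
    Set.InjOn (fun V => φ V ∩ (B \ A)) (Set.Icc A B) := by
  intro U hU V hV hUV
  by_contra hne
  exact h hU hV hne ((inter_eq_inter_iff_disjoint_symmDiff.1 hUV).mono_right
    (symmDiff_subset_sdiff_of_mem_Icc hU hV))

theorem IsSeparating.surjOn (h : IsSeparating φ A B) (hAB : A ⊆ B) :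
    Set.SurjOn (fun V => φ V ∩ (B \ A)) (Set.Icc A B) (B \ A).powerset := by
  rw [← coe_Icc]
  refine surjOn_of_injOn_of_card_le _ (fun V _ => by simp) (by simpa using h.injOn) ?_
  rw [card_powerset, card_Icc_finset hAB, card_sdiff_of_subset hAB]

theorem IsSeparating.hasUniqueSink (h : IsSeparating φ A B) (hAB : A ⊆ B) :
    HasUniqueSink φ A B := by
  obtain ⟨V, hV, hsink⟩ := h.surjOn hAB (mem_coe.2 (empty_mem_powerset (B \ A)))
  exact ⟨V, ⟨hV.1, hV.2, hsink⟩, fun W hW =>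
    h.injOn ⟨hW.1, hW.2.1⟩ hV (hW.2.2.trans hsink.symm)⟩

theorem isUSO_iff_isSeparating (hAB : A ⊆ B) : IsUSO φ A B ↔ IsSeparating φ A B :=
  ⟨IsUSO.isSeparating, fun h => ⟨hAB, fun _ _ hA hAB' hB => (h.mono hA hB).hasUniqueSink hAB'⟩⟩

theorem IsSeparating.of_rightInvOn (h : IsSeparating φ A B)
    (hmaps : Set.MapsTo ψ (Set.Icc A' B') (Set.Icc A B))
    (hinv : Set.RightInvOn ψ φ (Set.Icc A' B')) : IsSeparating ψ A' B' := by
  intro U hU V hV hne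
  have hsep : ¬ Disjoint (φ (ψ U) ∆ φ (ψ V)) (ψ U ∆ ψ V) :=
    h (hmaps hU) (hmaps hV) (hinv.injOn.ne hU hV hne)
  rwa [hinv hU, hinv hV, disjoint_comm] at hsep

theorem dual_uso_general (hφ : IsUSO φ A B) (hA'B' : A' ⊆ B')
    (hmaps : Set.MapsTo ψ (Set.Icc A' B') (Set.Icc A B))
    (hinv : Set.RightInvOn ψ φ (Set.Icc A' B')) : IsUSO ψ A' B' :=
  (isUSO_iff_isSeparating hA'B').2 (hφ.isSeparating.of_rightInvOn hmaps hinv)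

end

/-- Duality: if `φ` is a bijective outmap of the standard `n`-cube (with
two-sided inverse `φinv` on the subsets of `{1,…,n}`) that is a USO of the full
face, then the inverse map is also a USO of the full face. -/
theorem dual_uso (n : ℕ) (φ φinv : Finset ℕ → Finset ℕ)
    (hmap : ∀ V : Finset ℕ, V ⊆ Finset.Icc 1 n → φ V ⊆ Finset.Icc 1 n)
    (hmapinv : ∀ V : Finset ℕ, V ⊆ Finset.Icc 1 n → φinv V ⊆ Finset.Icc 1 n)
    (hleft : ∀ V : Finset ℕ, V ⊆ Finset.Icc 1 n → φinv (φ V) = V)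
    (hright : ∀ V : Finset ℕ, V ⊆ Finset.Icc 1 n → φ (φinv V) = V)
    (hφ : IsUSO φ ∅ (Finset.Icc 1 n)) :
    IsUSO φinv ∅ (Finset.Icc 1 n) :=
  dual_uso_general hφ (empty_subset _) (fun V hV => ⟨empty_subset _, hmapinv V hV.2⟩)
    fun V hV => hright V hV.2
end
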